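/- arXiv:1702.02095 — 3 statements merged into one kernel-verified Lean document; each statement's English description precedes it below -/
import Mathlib

section
/- Let n > 4 and 2 ≤ k < n/2 with both n and k even, and suppose the binomial coefficient C(n,k) is even. Then the Kneser graph K(n,k) is not a Cayley graph; that is, no subgroup of the automorphism group of K(n,k) acts regularly (i.e., freely and transitively) on the vertex set of K(n,k). -/
/-- The Kneser graph `K(n,k)`: vertices are the `k`-element subsets of `Fin n`,
with two vertices adjacent iff the corresponding subsets are disjoint. -/
def kneserGraph (n k : ℕ) : SimpleGraph {s : Finset (Fin n) // s.card = k} :=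
  SimpleGraph.fromRel (fun v w => Disjoint v.val w.val)

/-- A graph is a Cayley graph iff some subgroup of its automorphism group acts
regularly (freely and transitively) on the vertex set. -/
def IsCayleyGraph {V : Type*} (G : SimpleGraph V) : Prop :=
  ∃ H : Subgroup (G ≃g G), ∀ v w : V, ∃! g : H, (g : G ≃g G) v = w

/-!
A regular group of automorphisms of `K(n,k)` has order `n.choose k`, which is even, so by Cauchy's
theorem it contains an involution, which fixes no vertex. If `2 * k < n`, then every automorphism
of `K(n,k)` is induced by a permutation of `Fin n`, and the permutation inducing an involution is
itself involutive. But an involutive permutation of `n` points leaves some `k`-set invariant when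
`k` is even or `n` is odd: for even `k` take a union of pairs, each a 2-cycle or two fixed points;
for `n` and `k` odd take the complement of such a union.

To see that an automorphism `φ` comes from a permutation, note that `A` and `B` have
`(n - #(A ∪ B)).choose k` common neighbours, and that `C ⊆ A ∪ B` iff each of these is also
adjacent to `C`. Hence `φ` extends to the `k + 1`-sets compatibly with inclusion. An
inclusion-preserving pair of permutations of the levels `k + 1` and `k + 2` determines one of the
levels `k` and `k + 1`, and this descends to a permutation of the points.
-/

open Finset

theorem not_le_sup_of_covBy {L : Type*} [DistribLattice L] {a b c s : L} (ha : s ⩿ a)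
    (hb : s ⩿ b) (hc : s ⋖ c) (hca : c ≠ a) (hcb : c ≠ b) : ¬ c ≤ a ⊔ b := by
  intro hle
  apply hc.ne'
  calc c = c ⊓ a ⊔ c ⊓ b := by rw [← inf_sup_left, inf_eq_left.2 hle]
    _ = s := by rw [hc.wcovBy.inf_eq ha hca, hc.wcovBy.inf_eq hb hcb, sup_idem]

/-- The idea: `c ⊓ (a ⊔ b)` lies strictly below `c`, so it equals both `a ⊓ c` and `b ⊓ c`. -/
theorem inf_le_of_covBy_of_not_le_sup {L : Type*} [Lattice L] [IsLowerModularLattice L]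
    {a b c u v : L} (hau : a ⋖ u) (hcu : c ⋖ u) (hbv : b ⋖ v) (hcv : c ⋖ v)
    (hab : ¬ a ≤ b) (hc : ¬ c ≤ a ⊔ b) : a ⊓ b ≤ c := by
  have inf_covBy {x w : L} (hxw : x ⋖ w) (hcw : c ⋖ w) (hxc : x ≠ c) : x ⊓ c ⋖ c :=
    inf_covBy_of_covBy_sup_left (hxw.wcovBy.sup_eq hcw.wcovBy hxc ▸ hxw)
  have hac : a ≠ c := fun h ↦ hc (h ▸ le_sup_left)
  have hbc : b ≠ c := fun h ↦ hc (h ▸ le_sup_right)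
  have hne : c ⊓ (a ⊔ b) ≠ c := fun h ↦ hc (inf_eq_left.1 h)
  have hac_eq : c ⊓ (a ⊔ b) = a ⊓ c :=
    ((inf_covBy hau hcu hac).eq_or_eq (le_inf inf_le_right (inf_le_left.trans le_sup_left))
      inf_le_left).resolve_right hne
  have hbc_eq : c ⊓ (a ⊔ b) = b ⊓ c :=
    ((inf_covBy hbv hcv hbc).eq_or_eq (le_inf inf_le_right (inf_le_left.trans le_sup_right))
      inf_le_left).resolve_right hne
  have hac_le : a ⊓ c ≤ a ⊓ b :=
    le_inf inf_le_left ((hac_eq.symm.trans hbc_eq).le.trans inf_le_left)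
  have hac_covBy : a ⊓ c ⋖ a :=
    inf_comm c a ▸ inf_covBy_of_covBy_sup_left (hcu.wcovBy.sup_eq hau.wcovBy hac.symm ▸ hcu)
  have hab_eq : a ⊓ b = a ⊓ c :=
    (hac_covBy.eq_or_eq hac_le inf_le_left).resolve_right fun h ↦ hab (inf_eq_left.1 h)
  exact hab_eq.le.trans inf_le_right

/-! ### Levels of the Boolean lattice -/

/-- The `k`-th level of the Boolean lattice of subsets of `α`, as a type. It is reducible so that
`Level (Fin n) k` is literally the vertex type of `kneserGraph n k`. -/
abbrev Level (α : Type*) (k : ℕ) : Type _ :=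
  {s : Finset α // s.card = k}

namespace Level

variable {α : Type*} {k : ℕ}

theorem eq_of_subset {A B : Level α k} (h : A.1 ⊆ B.1) : A = B :=
  Subtype.ext (eq_of_subset_of_card_le h (B.2.trans A.2.symm).le)

theorem covBy_of_subset {A : Level α k} {U : Level α (k + 1)} (h : A.1 ⊆ U.1) : A.1 ⋖ U.1 := by
  classical
  exact covBy_iff_card_sdiff_eq_one.2 ⟨h, by rw [card_sdiff_of_subset h, A.2, U.2]; omega⟩

theorem exists_ne_subset (hk : k ≠ 0) (U : Level α (k + 1)) :
    ∃ A B : Level α k, A ≠ B ∧ A.1 ⊆ U.1 ∧ B.1 ⊆ U.1 := by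
  classical
  obtain ⟨x, hx, y, hy, hxy⟩ := one_lt_card.1 (by rw [U.2]; omega : 1 < U.1.card)
  refine ⟨⟨U.1.erase x, by simp [hx, U.2]⟩, ⟨U.1.erase y, by simp [hy, U.2]⟩, fun h ↦ ?_,
    erase_subset _ _, erase_subset _ _⟩
  exact hxy (erase_injOn _ hx hy (congrArg Subtype.val h))

theorem exists_ne_superset [Fintype α] (hk : k + 2 ≤ Fintype.card α) (S : Level α k) :
    ∃ A B : Level α (k + 1), A ≠ B ∧ S.1 ⊆ A.1 ∧ S.1 ⊆ B.1 := by
  classical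
  obtain ⟨x, hx, y, hy, hxy⟩ :=
    one_lt_card.1 (by rw [card_compl, S.2]; omega : 1 < S.1ᶜ.card)
  rw [mem_compl] at hx hy
  refine ⟨⟨insert x S.1, by simp [hx, S.2]⟩, ⟨insert y S.1, by simp [hy, S.2]⟩, fun h ↦ ?_,
    subset_insert _ _, subset_insert _ _⟩
  exact hxy ((insert_inj hx).1 (congrArg Subtype.val h))

variable [DecidableEq α]

theorem union_eq {A B : Level α k} {U : Level α (k + 1)} (hAB : A ≠ B) (hA : A.1 ⊆ U.1)
    (hB : B.1 ⊆ U.1) : A.1 ∪ B.1 = U.1 :=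
  (covBy_of_subset hA).wcovBy.sup_eq (covBy_of_subset hB).wcovBy (Subtype.coe_ne_coe.2 hAB)

theorem inter_eq {A B : Level α (k + 1)} {S : Level α k} (hAB : A ≠ B) (hA : S.1 ⊆ A.1)
    (hB : S.1 ⊆ B.1) : A.1 ∩ B.1 = S.1 :=
  (covBy_of_subset hA).wcovBy.inf_eq (covBy_of_subset hB).wcovBy (Subtype.coe_ne_coe.2 hAB)

theorem card_inter_of_subset {A B : Level α (k + 1)} {U : Level α (k + 2)} (hAB : A ≠ B)
    (hA : A.1 ⊆ U.1) (hB : B.1 ⊆ U.1) : (A.1 ∩ B.1).card = k := by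
  have hcard := card_union_add_card_inter A.1 B.1
  rw [union_eq hAB hA hB, A.2, B.2, U.2] at hcard
  omega

theorem card_union_of_subset {A B : Level α (k + 1)} {S : Level α k} (hAB : A ≠ B)
    (hA : S.1 ⊆ A.1) (hB : S.1 ⊆ B.1) : (A.1 ∪ B.1).card = k + 2 := by
  have hcard := card_union_add_card_inter A.1 B.1
  rw [inter_eq hAB hA hB, A.2, B.2, S.2] at hcard
  omega

theorem exists_perm_of_one (e : Equiv.Perm (Level α 1)) :
    ∃ σ : Equiv.Perm α, ∀ A, (e A).1 = A.1.image σ := by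
  let s : α ≃ Level α 1 := Set.powersetCard.ofSingleton
  have val_s (x : α) : (s x).1 = {x} := rfl
  refine ⟨(s.trans e).trans s.symm, fun A ↦ ?_⟩
  obtain ⟨x, rfl⟩ := s.surjective A
  rw [val_s, image_singleton, ← val_s, Equiv.trans_apply, Equiv.trans_apply, s.apply_symm_apply]

theorem eq_one_of_forall_image_eq [Fintype α] (hk : k ≠ 0) (hkα : k < Fintype.card α)
    {σ : Equiv.Perm α} (h : ∀ A : Level α k, A.1.image σ = A.1) : σ = 1 := by
  by_contra hσ
  obtain ⟨x, hx⟩ : ∃ x, σ x ≠ x := by simpa [Equiv.ext_iff] using hσ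
  obtain ⟨A, hxA, hσA⟩ := Set.powersetCard.exists_mem_notMem (n := k)
    (Nat.one_le_iff_ne_zero.2 hk) (by simpa using hkα) hx.symm
  exact hσA ((h A).subset (mem_image_of_mem σ hxA))

theorem involutive_of_forall_eq_image [Fintype α] (hk : k ≠ 0) (hkα : k < Fintype.card α)
    {f : Level α k → Level α k} (hf : Function.Involutive f) {σ : Equiv.Perm α}
    (hσ : ∀ A, (f A).1 = A.1.image σ) : Function.Involutive σ := by
  have hσσ : σ * σ = 1 := eq_one_of_forall_image_eq hk hkα fun A ↦ by
    rw [Equiv.Perm.coe_mul, ← image_image, ← hσ, ← hσ, hf]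
  exact Equiv.Perm.congr_fun hσσ

end Level

/-- The permutations `e` of level `k` and `f` of level `k + 1` together form an automorphism of the
inclusion order between these two levels. -/
def PreservesInclusion {α : Type*} {k : ℕ} (e : Equiv.Perm (Level α k))
    (f : Equiv.Perm (Level α (k + 1))) : Prop :=
  ∀ A U, (e A).1 ⊆ (f U).1 ↔ A.1 ⊆ U.1

namespace PreservesInclusion

variable {α : Type*} {k : ℕ}

theorem symm {e : Equiv.Perm (Level α k)} {f : Equiv.Perm (Level α (k + 1))}
    (h : PreservesInclusion e f) : PreservesInclusion e.symm f.symm := fun A U ↦ by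
  rw [← h, e.apply_symm_apply, f.apply_symm_apply]

theorem union_eq [DecidableEq α] {e : Equiv.Perm (Level α k)}
    {f : Equiv.Perm (Level α (k + 1))} (h : PreservesInclusion e f) {A B : Level α k}
    {U : Level α (k + 1)} (hAB : A ≠ B) (hA : A.1 ⊆ U.1) (hB : B.1 ⊆ U.1) :
    (e A).1 ∪ (e B).1 = (f U).1 :=
  Level.union_eq (e.injective.ne hAB) ((h A U).2 hA) ((h B U).2 hB)

/-- Three distinct sets on a level that pairwise lie in a common set of the next level either all
contain one set of the previous level or all lie in one set of the next level, but not both. The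
second alternative is preserved by `f`, hence so is the first. -/
theorem inter_subset [DecidableEq α] {e : Equiv.Perm (Level α (k + 1))}
    {f : Equiv.Perm (Level α (k + 2))} (h : PreservesInclusion e f) {A B C : Level α (k + 1)}
    {S : Level α k} (hAB : A ≠ B) (hA : S.1 ⊆ A.1) (hB : S.1 ⊆ B.1) (hC : S.1 ⊆ C.1) :
    (e A).1 ∩ (e B).1 ⊆ (e C).1 := by
  rcases eq_or_ne C A with rfl | hCA
  · exact inter_subset_left
  rcases eq_or_ne C B with rfl | hCB
  · exact inter_subset_right
  let U : Level α (k + 2) := ⟨A.1 ∪ B.1, Level.card_union_of_subset hAB hA hB⟩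
  let V : Level α (k + 2) := ⟨A.1 ∪ C.1, Level.card_union_of_subset hCA.symm hA hC⟩
  let W : Level α (k + 2) := ⟨B.1 ∪ C.1, Level.card_union_of_subset hCB.symm hB hC⟩
  have hCU : ¬ C.1 ⊆ U.1 :=
    not_le_sup_of_covBy (Level.covBy_of_subset hA).wcovBy (Level.covBy_of_subset hB).wcovBy
      (Level.covBy_of_subset hC) (Subtype.coe_ne_coe.2 hCA) (Subtype.coe_ne_coe.2 hCB)
  have hU : (e A).1 ∪ (e B).1 = (f U).1 := h.union_eq hAB subset_union_left subset_union_right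
  have covBy_image {X : Level α (k + 1)} {Y : Level α (k + 2)} (hXY : X.1 ⊆ Y.1) :
      (e X).1 ⋖ (f Y).1 := Level.covBy_of_subset ((h X Y).2 hXY)
  refine inf_le_of_covBy_of_not_le_sup (covBy_image (Y := V) subset_union_left)
    (covBy_image subset_union_right) (covBy_image (Y := W) subset_union_left)
    (covBy_image subset_union_right) (fun hle ↦ hAB (e.injective (Level.eq_of_subset hle))) ?_
  rwa [sup_eq_union, hU, h C U]

theorem exists_lower_of_forall_exists [Fintype α] (hk : k + 2 ≤ Fintype.card α)
    {e : Equiv.Perm (Level α (k + 1))}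
    (he : ∀ S : Level α k, ∃ T : Level α k, ∀ A, T.1 ⊆ (e A).1 ↔ S.1 ⊆ A.1) :
    ∃ d : Equiv.Perm (Level α k), PreservesInclusion d e := by
  classical
  choose d hd using he
  have hd_inj : Function.Injective d := by
    intro S S' hSS'
    obtain ⟨A, B, hAB, hA, hB⟩ := Level.exists_ne_superset hk S
    have hA' : S'.1 ⊆ A.1 := by rwa [← hd, ← hSS', hd]
    have hB' : S'.1 ⊆ B.1 := by rwa [← hd, ← hSS', hd]
    exact Subtype.ext ((Level.inter_eq hAB hA hB).symm.trans (Level.inter_eq hAB hA' hB'))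
  exact ⟨.ofBijective d (Finite.injective_iff_bijective.1 hd_inj), hd⟩

theorem exists_upper_of_forall_exists [Finite α] (hk : k ≠ 0) {e : Equiv.Perm (Level α k)}
    (he : ∀ U : Level α (k + 1), ∃ W : Level α (k + 1), ∀ A, (e A).1 ⊆ W.1 ↔ A.1 ⊆ U.1) :
    ∃ f : Equiv.Perm (Level α (k + 1)), PreservesInclusion e f := by
  classical
  choose f hf using he
  have hf_inj : Function.Injective f := by
    intro U U' hUU'
    obtain ⟨A, B, hAB, hA, hB⟩ := Level.exists_ne_subset hk U
    have hA' : A.1 ⊆ U'.1 := by rwa [← hf, ← hUU', hf]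
    have hB' : B.1 ⊆ U'.1 := by rwa [← hf, ← hUU', hf]
    exact Subtype.ext ((Level.union_eq hAB hA hB).symm.trans (Level.union_eq hAB hA' hB'))
  exact ⟨.ofBijective f (Finite.injective_iff_bijective.1 hf_inj), fun A U ↦ hf U A⟩

theorem exists_lower [Fintype α] (hk : k + 2 ≤ Fintype.card α) {e : Equiv.Perm (Level α (k + 1))}
    {f : Equiv.Perm (Level α (k + 2))} (h : PreservesInclusion e f) :
    ∃ d : Equiv.Perm (Level α k), PreservesInclusion d e := by
  classical
  refine exists_lower_of_forall_exists hk fun S ↦ ?_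
  obtain ⟨A, B, hAB, hA, hB⟩ := Level.exists_ne_superset hk S
  let U : Level α (k + 2) := ⟨A.1 ∪ B.1, Level.card_union_of_subset hAB hA hB⟩
  let T : Level α k := ⟨(e A).1 ∩ (e B).1, Level.card_inter_of_subset (e.injective.ne hAB)
    ((h A U).2 subset_union_left) ((h B U).2 subset_union_right)⟩
  refine ⟨T, fun C ↦ ⟨fun hC ↦ ?_, h.inter_subset hAB hA hB⟩⟩
  have hABC : A.1 ∩ B.1 ⊆ C.1 := by
    simpa only [e.symm_apply_apply] using
      h.symm.inter_subset (S := T) (e.injective.ne hAB) inter_subset_left inter_subset_right hC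
  rwa [Level.inter_eq hAB hA hB] at hABC

variable [DecidableEq α]

theorem image_eq_of_lower (hk : k ≠ 0) {d : Equiv.Perm (Level α k)}
    {e : Equiv.Perm (Level α (k + 1))} (h : PreservesInclusion d e) {σ : Equiv.Perm α}
    (hσ : ∀ S, (d S).1 = S.1.image σ) (A : Level α (k + 1)) : (e A).1 = A.1.image σ := by
  obtain ⟨S, T, hST, hS, hT⟩ := Level.exists_ne_subset hk A
  rw [← Level.union_eq hST hS hT, image_union, ← hσ, ← hσ, h.union_eq hST hS hT]

theorem exists_perm [Fintype α] (hk : k ≠ 0) (hkα : k + 1 ≤ Fintype.card α)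
    {e : Equiv.Perm (Level α k)} {f : Equiv.Perm (Level α (k + 1))} (h : PreservesInclusion e f) :
    ∃ σ : Equiv.Perm α, ∀ A, (e A).1 = A.1.image σ := by
  induction k, Nat.one_le_iff_ne_zero.2 hk using Nat.le_induction with
  | base => exact Level.exists_perm_of_one e
  | succ k hk ih =>
    obtain ⟨d, hd⟩ := h.exists_lower hkα
    obtain ⟨σ, hσ⟩ := ih (by omega) (by omega) hd
    exact ⟨σ, hd.image_eq_of_lower (by omega) hσ⟩

end PreservesInclusion

/-! ### Automorphisms of Kneser graphs -/

theorem choose_lt_choose_left {a b k : ℕ} (hk : k ≠ 0) (hab : a < b) (hkb : k ≤ b) :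
    a.choose k < b.choose k := by
  obtain ⟨j, rfl⟩ := Nat.exists_eq_succ_of_ne_zero hk
  obtain ⟨c, rfl⟩ := Nat.exists_eq_succ_of_ne_zero (Nat.ne_zero_of_lt hab)
  calc a.choose (j + 1) ≤ c.choose (j + 1) := Nat.choose_le_choose _ (Nat.lt_succ_iff.1 hab)
    _ < c.choose j + c.choose (j + 1) :=
      Nat.lt_add_of_pos_left (Nat.choose_pos (Nat.succ_le_succ_iff.1 hkb))
    _ = (c + 1).choose (j + 1) := (Nat.choose_succ_succ' c j).symm

theorem eq_of_choose_eq_choose {a b k : ℕ} (hk : k ≠ 0) (hkb : k ≤ b)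
    (h : a.choose k = b.choose k) : a = b := by
  rcases lt_trichotomy a b with hab | hab | hba
  · exact absurd h (choose_lt_choose_left hk hab hkb).ne
  · exact hab
  · exact absurd h (choose_lt_choose_left hk hba (hkb.trans hba.le)).ne'

theorem image_commonNeighbors {V W : Type*} {G : SimpleGraph V} {G' : SimpleGraph W}
    (φ : G ≃g G') (v w : V) :
    φ '' G.commonNeighbors v w = G'.commonNeighbors (φ v) (φ w) := by
  rw [SimpleGraph.commonNeighbors_eq, Set.image_inter φ.injective, φ.image_neighborSet,
    φ.image_neighborSet, SimpleGraph.commonNeighbors_eq]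

section Kneser

variable {n k : ℕ}

theorem kneserGraph_adj (hk : k ≠ 0) {A B : Level (Fin n) k} :
    (kneserGraph n k).Adj A B ↔ Disjoint A.1 B.1 := by
  have ne_of_disjoint (h : Disjoint A.1 B.1) : A ≠ B := by
    rintro rfl
    exact hk (A.2.symm.trans (card_eq_zero.2 (disjoint_self.1 h)))
  rw [kneserGraph, SimpleGraph.fromRel_adj, disjoint_comm (a := B.1), or_self]
  exact and_iff_right_of_imp ne_of_disjoint

theorem mem_commonNeighbors_kneserGraph (hk : k ≠ 0) {A B D : Level (Fin n) k} :
    D ∈ (kneserGraph n k).commonNeighbors A B ↔ D.1 ⊆ (A.1 ∪ B.1)ᶜ := by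
  rw [SimpleGraph.mem_commonNeighbors, kneserGraph_adj hk, kneserGraph_adj hk,
    subset_compl_iff_disjoint_left, disjoint_union_left]

theorem ncard_commonNeighbors_kneserGraph (hk : k ≠ 0) (A B : Level (Fin n) k) :
    ((kneserGraph n k).commonNeighbors A B).ncard = (n - (A.1 ∪ B.1).card).choose k := by
  have image_val : Subtype.val '' (kneserGraph n k).commonNeighbors A B =
      (powersetCard k (A.1 ∪ B.1)ᶜ : Set (Finset (Fin n))) := by
    ext D
    simp [mem_commonNeighbors_kneserGraph hk, mem_powersetCard]
  rw [← Set.ncard_image_of_injective _ Subtype.val_injective, image_val, Set.ncard_coe_finset,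
    card_powersetCard, card_compl, Fintype.card_fin]

theorem subset_union_iff_commonNeighbors_subset (hk : k ≠ 0) {A B : Level (Fin n) k}
    (hAB : (A.1 ∪ B.1).card + k ≤ n) (C : Level (Fin n) k) :
    C.1 ⊆ A.1 ∪ B.1 ↔
      (kneserGraph n k).commonNeighbors A B ⊆ (kneserGraph n k).neighborSet C := by
  constructor
  · intro hC D hD
    rw [mem_commonNeighbors_kneserGraph hk, subset_compl_iff_disjoint_left] at hD
    exact (kneserGraph_adj hk).2 (hD.mono_left hC)
  · intro hN x hxC
    by_contra hx
    obtain ⟨D, hxD, hD, hDcard⟩ := exists_subsuperset_card_eq (n := k)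
      (singleton_subset_iff.2 (mem_compl.2 hx)) (by rw [card_singleton]; omega)
      (by rw [card_compl, Fintype.card_fin]; omega)
    have hCD := hN ((mem_commonNeighbors_kneserGraph hk (D := ⟨D, hDcard⟩)).2 hD)
    exact disjoint_left.1 ((kneserGraph_adj hk).1 hCD) hxC (singleton_subset_iff.1 hxD)

variable (φ : kneserGraph n k ≃g kneserGraph n k)

theorem card_union_kneserGraph_iso (hk : k ≠ 0) {A B : Level (Fin n) k}
    (hAB : (A.1 ∪ B.1).card + k ≤ n) :
    ((φ A).1 ∪ (φ B).1).card = (A.1 ∪ B.1).card := by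
  have hcard : (n - ((φ A).1 ∪ (φ B).1).card).choose k = (n - (A.1 ∪ B.1).card).choose k := by
    rw [← ncard_commonNeighbors_kneserGraph hk, ← ncard_commonNeighbors_kneserGraph hk,
      ← image_commonNeighbors, Set.ncard_image_of_injective _ φ.injective]
  have hsub := eq_of_choose_eq_choose hk (by omega) hcard
  have hle := card_le_univ ((φ A).1 ∪ (φ B).1)
  rw [Fintype.card_fin] at hle
  omega

theorem subset_union_kneserGraph_iso (hk : k ≠ 0) {A B : Level (Fin n) k}
    (hAB : (A.1 ∪ B.1).card + k ≤ n) (C : Level (Fin n) k) :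
    (φ C).1 ⊆ (φ A).1 ∪ (φ B).1 ↔ C.1 ⊆ A.1 ∪ B.1 := by
  rw [subset_union_iff_commonNeighbors_subset hk hAB, subset_union_iff_commonNeighbors_subset hk
    (by rwa [card_union_kneserGraph_iso φ hk hAB]), ← image_commonNeighbors,
    ← φ.image_neighborSet, Set.image_subset_image_iff φ.injective]

theorem exists_preservesInclusion_kneserGraph_iso (hk : k ≠ 0) (hkn : 2 * k < n) :
    ∃ f : Equiv.Perm (Level (Fin n) (k + 1)), PreservesInclusion φ.toEquiv f := by
  refine PreservesInclusion.exists_upper_of_forall_exists hk fun U ↦ ?_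
  obtain ⟨A, B, hAB, hA, hB⟩ := Level.exists_ne_subset hk U
  have hU := Level.union_eq hAB hA hB
  have hcard : (A.1 ∪ B.1).card = k + 1 := by rw [hU, U.2]
  refine ⟨⟨(φ A).1 ∪ (φ B).1, (card_union_kneserGraph_iso φ hk (by omega)).trans hcard⟩,
    fun C ↦ ?_⟩
  rw [← hU]
  exact subset_union_kneserGraph_iso φ hk (by omega) C

theorem exists_perm_kneserGraph_iso (hk : k ≠ 0) (hkn : 2 * k < n) :
    ∃ σ : Equiv.Perm (Fin n), ∀ A, (φ A).1 = A.1.image σ := by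
  obtain ⟨f, hf⟩ := exists_preservesInclusion_kneserGraph_iso φ hk hkn
  exact hf.exists_perm hk (by rw [Fintype.card_fin]; omega)

end Kneser

/-! ### Invariant sets and fixed-point-free involutions -/

theorem exists_invariant_pair_of_involutive {α : Type*} [DecidableEq α] {f : α → α}
    (hf : Function.Involutive f) {T : Finset α} (hT : T.image f = T) (hT_card : 1 < T.card) :
    ∃ P ⊆ T, P.card = 2 ∧ P.image f = P := by
  by_cases hfix : ∀ x ∈ T, f x = x
  · obtain ⟨P, hPT, hP⟩ := exists_subset_card_eq (Nat.succ_le_of_lt hT_card)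
    exact ⟨P, hPT, hP, (image_congr fun x hx ↦ hfix x (hPT hx)).trans image_id⟩
  · push Not at hfix
    obtain ⟨x, hxT, hx⟩ := hfix
    have hfxT : f x ∈ T := hT ▸ mem_image_of_mem f hxT
    refine ⟨{x, f x}, by simp [insert_subset_iff, hxT, hfxT], card_pair hx.symm, ?_⟩
    rw [image_insert, image_singleton, hf x, pair_comm]

theorem exists_invariant_subset_two_mul_of_involutive {α : Type*} [DecidableEq α] {f : α → α}
    (hf : Function.Involutive f) {T : Finset α} (hT : T.image f = T) {m : ℕ}
    (hm : 2 * m ≤ T.card) : ∃ A ⊆ T, A.card = 2 * m ∧ A.image f = A := by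
  induction m with
  | zero => exact ⟨∅, by simp⟩
  | succ m ih =>
    obtain ⟨A, hAT, hA_card, hA⟩ := ih (by omega)
    obtain ⟨P, hPT, hP_card, hP⟩ := exists_invariant_pair_of_involutive hf (T := T \ A)
      (by rw [image_sdiff _ _ hf.injective, hT, hA])
      (by rw [card_sdiff_of_subset hAT]; omega)
    have hAP : Disjoint A P := disjoint_sdiff.mono_right hPT
    exact ⟨A ∪ P, union_subset hAT (hPT.trans sdiff_subset),
      by rw [card_union_of_disjoint hAP]; omega, by rw [image_union, hA, hP]⟩

theorem exists_invariant_subset_of_involutive {α : Type*} [DecidableEq α] {f : α → α}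
    (hf : Function.Involutive f) {T : Finset α} (hT : T.image f = T) {k : ℕ} (hk : k ≤ T.card)
    (hparity : Even k ∨ Odd T.card) : ∃ A ⊆ T, A.card = k ∧ A.image f = A := by
  rcases Nat.even_or_odd' k with ⟨m, rfl | rfl⟩
  · exact exists_invariant_subset_two_mul_of_involutive hf hT hk
  · obtain ⟨l, hl⟩ : Odd T.card := hparity.resolve_left (by simp)
    obtain ⟨A, hAT, hA_card, hA⟩ :=
      exists_invariant_subset_two_mul_of_involutive hf hT (m := l - m) (by omega)
    exact ⟨T \ A, sdiff_subset, by rw [card_sdiff_of_subset hAT]; omega,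
      by rw [image_sdiff _ _ hf.injective, hT, hA]⟩

theorem IsCayleyGraph.exists_involutive_forall_ne {V : Type*} [Finite V] {G : SimpleGraph V}
    (hG : IsCayleyGraph G) (hV : Even (Nat.card V)) :
    ∃ φ : G ≃g G, Function.Involutive φ ∧ ∀ v, φ v ≠ v := by
  obtain ⟨H, hH⟩ := hG
  rcases isEmpty_or_nonempty V with hV_empty | ⟨⟨v⟩⟩
  · exact ⟨.refl, fun _ ↦ rfl, isEmptyElim⟩
  have orbit_bijective : Function.Bijective fun g : H ↦ g.1 v :=
    ⟨fun g g' h ↦ (hH v _).unique h rfl, fun w ↦ (hH v w).exists⟩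
  have : Finite H := .of_injective _ orbit_bijective.1
  have hcard : 2 ∣ Nat.card H := Nat.card_eq_of_bijective _ orbit_bijective ▸ hV.two_dvd
  obtain ⟨g, hg⟩ := exists_prime_orderOf_dvd_card' 2 hcard
  obtain ⟨hgg, hg_ne⟩ := orderOf_eq_prime_iff.1 hg
  refine ⟨g.1, fun w ↦ ?_, fun w hw ↦ hg_ne ((hH w w).unique hw rfl)⟩
  exact congrArg (fun h : H ↦ h.1 w) ((pow_two g).symm.trans hgg)

theorem kneser_not_cayley_of_even_even_general (n k : ℕ) (hparity : Even k ∨ Odd n)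
    (hkn : 2 * k < n) (heven : Even (n.choose k)) : ¬ IsCayleyGraph (kneserGraph n k) := by
  intro hCayley
  have hk : k ≠ 0 := by rintro rfl; simp at heven
  have hcard : Nat.card (Level (Fin n) k) = n.choose k := by
    rw [Nat.card_eq_fintype_card, Fintype.card_finset_len, Fintype.card_fin]
  obtain ⟨φ, hφ, hφ_ne⟩ := hCayley.exists_involutive_forall_ne (hcard ▸ heven)
  obtain ⟨σ, hσ⟩ := exists_perm_kneserGraph_iso φ hk hkn
  have hσ_inv : Function.Involutive σ := Level.involutive_of_forall_eq_image hk
    (by rw [Fintype.card_fin]; omega) hφ hσ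
  obtain ⟨A, -, hA_card, hA⟩ := exists_invariant_subset_of_involutive hσ_inv (T := univ) (k := k)
    (image_univ_equiv σ) (by rw [card_fin]; omega) (by rwa [card_fin])
  exact hφ_ne ⟨A, hA_card⟩ (Subtype.ext ((hσ _).trans hA))

theorem kneser_not_cayley_of_even_even (n k : ℕ) (hn : 4 < n) (hneven : Even n)
    (hkeven : Even k) (hk : 2 ≤ k) (hkn : 2 * k < n) (heven : Even (n.choose k)) :
    ¬ IsCayleyGraph (kneserGraph n k) :=
  kneser_not_cayley_of_even_even_general n k (.inl hkeven) hkn heven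
end

section
/- Let k > 4 be an even integer such that the binomial coefficient C(2k+1, k) is divisible by 4. Then the line graph L(O_{k+1}) of the odd graph O_{k+1} is not a Cayley graph; that is, no subgroup of the automorphism group of L(O_{k+1}) acts regularly (freely and transitively) on its vertex set. -/
/-!
An involutive automorphism of `L(O_{k+1})` comes from an involutive automorphism of `O_{k+1}`,
because `O_{k+1}` is triangle-free, and this in turn comes from an involution `π` of the `2k+1`
points. Since `2k+1` is odd, `π` fixes a point `x`; since `k` is even, some `k`-set `A` avoiding `x`
is a union of fixed points and 2-cycles of `π`. The edge joining `A` to the complement of `A ∪ {x}`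
is then fixed, so no regular group of automorphisms contains an involution. But `L(O_{k+1})` has
`C(2k+1, k) * (k+1) / 2` vertices, an even number, so a regular group would contain one.
-/

/-! ### Separating incidence relations -/

section Incidence

variable {P P' B B' : Type*}

/-- An incidence relation between points and blocks is separating if no point lies on all the blocks
through another point, so that an action on the blocks determines the action on the points. -/
def IsSeparating (I : P → B → Prop) : Prop :=
  ∀ p q, (∀ b, I p b → I q b) → p = q

theorem IsSeparating.exists_equiv {I : P → B → Prop} {I' : P' → B' → Prop} (hI : IsSeparating I)
    (hI' : IsSeparating I') (σ : B ≃ B') (hσ : ∀ p, ∃ p', ∀ b, I p b → I' p' (σ b))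
    (hσ_symm : ∀ p', ∃ p, ∀ b', I' p' b' → I p (σ.symm b')) :
    ∃ π : P ≃ P', ∀ p b, I p b ↔ I' (π p) (σ b) := by
  choose f hf using hσ
  choose g hg using hσ_symm
  have hgf : Function.LeftInverse g f := fun p =>
    (hI p (g (f p)) fun b hb => by simpa using hg _ _ (hf p b hb)).symm
  have hfg : Function.RightInverse g f := fun p' =>
    (hI' p' (f (g p')) fun b' hb' => by simpa using hf _ _ (hg p' b' hb')).symm
  refine ⟨⟨f, g, hgf, hfg⟩, fun p b => ⟨hf p b, fun h => ?_⟩⟩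
  simpa [hgf p] using hg _ _ h

theorem IsSeparating.involutive {I : P → B → Prop} (hI : IsSeparating I) {π : P → P} {σ : B → B}
    (hσ : Function.Involutive σ) (h : ∀ p b, I p b → I (π p) (σ b)) : Function.Involutive π :=
  fun p => (hI p (π (π p)) fun b hb => by simpa only [hσ b] using h _ _ (h p b hb)).symm

end Incidence

/-! ### Isomorphisms between line graphs of triangle-free graphs -/

section LineGraph

variable {V V' : Type*} {G : SimpleGraph V} {G' : SimpleGraph V'}

theorem isSeparating_mem_edge (hG : ∀ v, (G.neighborSet v).Nontrivial) :
    IsSeparating fun v (e : G.edgeSet) => v ∈ e.1 := by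
  intro u v huv
  obtain ⟨a, ha, b, hb, hab⟩ := hG u
  have hva : v = u ∨ v = a := by simpa using huv ⟨s(u, a), ha⟩ (Sym2.mem_mk_left u a)
  have hvb : v = u ∨ v = b := by simpa using huv ⟨s(u, b), hb⟩ (Sym2.mem_mk_left u b)
  grind

theorem mem_edge_of_cliqueFree_three (hG : G.CliqueFree 3) {e f g : G.edgeSet} (hef : e ≠ f)
    {v a b : V} (hve : v ∈ e.1) (hvf : v ∈ f.1) (hae : a ∈ e.1) (hag : a ∈ g.1) (hbf : b ∈ f.1)
    (hbg : b ∈ g.1) : v ∈ g.1 := by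
  classical
  by_contra hvg
  have hva : v ≠ a := fun h => hvg (h ▸ hag)
  have hvb : v ≠ b := fun h => hvg (h ▸ hbg)
  have hab : a ≠ b := by
    rintro rfl
    exact hef (Subtype.ext (Sym2.eq_of_ne_mem hva hve hae hvf hbf))
  refine hG {v, a, b} (SimpleGraph.is3Clique_triple_iff.2 ⟨?_, ?_, ?_⟩)
  · exact G.adj_iff_exists_edge.2 ⟨hva, e, e.2, hve, hae⟩
  · exact G.adj_iff_exists_edge.2 ⟨hvb, f, f.2, hvf, hbf⟩
  · exact G.adj_iff_exists_edge.2 ⟨hab, g, g.2, hag, hbg⟩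

theorem exists_mem_edge_of_lineGraph_iso (σ : G.lineGraph ≃g G'.lineGraph) {e f : G.edgeSet}
    {v : V} (hve : v ∈ e.1) (hvf : v ∈ f.1) : ∃ w, w ∈ (σ e).1 ∧ w ∈ (σ f).1 := by
  by_cases hef : e = f
  · subst hef
    exact ⟨_, Sym2.out_fst_mem _, Sym2.out_fst_mem _⟩
  · have hadj : G.lineGraph.Adj e f := SimpleGraph.lineGraph_adj_iff_exists.2 ⟨hef, v, hve, hvf⟩
    exact (SimpleGraph.lineGraph_adj_iff_exists.1 (σ.map_adj_iff.2 hadj)).2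

theorem exists_vertex_of_lineGraph_iso (hG : ∀ v, (G.neighborSet v).Nontrivial)
    (hG' : G'.CliqueFree 3) (σ : G.lineGraph ≃g G'.lineGraph) (v : V) :
    ∃ w, ∀ e : G.edgeSet, v ∈ e.1 → w ∈ (σ e).1 := by
  obtain ⟨a, ha, b, hb, hab⟩ := hG v
  let e₁ : G.edgeSet := ⟨s(v, a), ha⟩
  let e₂ : G.edgeSet := ⟨s(v, b), hb⟩
  have hv₁ : v ∈ e₁.1 := Sym2.mem_mk_left v a
  have hv₂ : v ∈ e₂.1 := Sym2.mem_mk_left v b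
  have hne : σ e₁ ≠ σ e₂ := fun h =>
    hab (Sym2.congr_right.1 (congrArg Subtype.val (σ.injective h)))
  obtain ⟨w, hw₁, hw₂⟩ := exists_mem_edge_of_lineGraph_iso σ hv₁ hv₂
  refine ⟨w, fun e hv => ?_⟩
  obtain ⟨p, hp₁, hp⟩ := exists_mem_edge_of_lineGraph_iso σ hv₁ hv
  obtain ⟨q, hq₂, hq⟩ := exists_mem_edge_of_lineGraph_iso σ hv₂ hv
  exact mem_edge_of_cliqueFree_three hG' hne hw₁ hw₂ hp₁ hp hq₂ hq

theorem exists_iso_of_lineGraph_iso (hG : G.CliqueFree 3) (hG' : G'.CliqueFree 3)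
    (hnt : ∀ v, (G.neighborSet v).Nontrivial) (hnt' : ∀ v, (G'.neighborSet v).Nontrivial)
    (σ : G.lineGraph ≃g G'.lineGraph) :
    ∃ φ : G ≃g G', ∀ v (e : G.edgeSet), v ∈ e.1 ↔ φ v ∈ (σ e).1 := by
  obtain ⟨φ, hφ⟩ := (isSeparating_mem_edge hnt).exists_equiv (isSeparating_mem_edge hnt') σ.toEquiv
    (exists_vertex_of_lineGraph_iso hnt hG' σ) (exists_vertex_of_lineGraph_iso hnt' hG σ.symm)
  refine ⟨⟨φ, fun {u v} => ?_⟩, hφ⟩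
  rw [SimpleGraph.adj_iff_exists_edge, SimpleGraph.adj_iff_exists_edge, φ.injective.ne_iff]
  refine and_congr_right fun _ => ⟨?_, ?_⟩
  · rintro ⟨e', he', hu, hv⟩
    obtain ⟨e, he⟩ := σ.surjective ⟨e', he'⟩
    exact ⟨e, e.2, (hφ u e).2 (by simpa [he] using hu), (hφ v e).2 (by simpa [he] using hv)⟩
  · rintro ⟨e, he, hu, hv⟩
    exact ⟨σ ⟨e, he⟩, (σ ⟨e, he⟩).2, (hφ u ⟨e, he⟩).1 hu, (hφ v ⟨e, he⟩).1 hv⟩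

end LineGraph

/-! ### Kneser graphs -/

section Kneser

variable {n k : ℕ}

theorem kneserGraph_adj_iff (hk : 0 < k) {A B : {s : Finset (Fin n) // s.card = k}} :
    (kneserGraph n k).Adj A B ↔ Disjoint A.1 B.1 := by
  rw [kneserGraph, SimpleGraph.fromRel_adj, disjoint_comm (a := B.1), or_self,
    and_iff_right_iff_imp]
  rintro hAB rfl
  have hcard := A.2
  simp only [disjoint_self.1 hAB, Finset.bot_eq_empty, Finset.card_empty] at hcard
  omega

theorem kneserGraph_cliqueFree {m : ℕ} (hn : n < m * k) : (kneserGraph n k).CliqueFree m := by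
  intro s hs
  have hk : 0 < k := Nat.pos_of_mul_pos_left (by omega : 0 < m * k)
  have hdisj : (s : Set _).PairwiseDisjoint Subtype.val := fun A hA B hB hAB =>
    (kneserGraph_adj_iff hk).1 (hs.isClique hA hB hAB)
  have hcard : (s.biUnion Subtype.val).card = m * k := by
    rw [Finset.card_biUnion hdisj, Finset.sum_congr rfl fun A _ => A.2, Finset.sum_const,
      hs.card_eq, smul_eq_mul]
  have hle := Finset.card_le_univ (s.biUnion Subtype.val)
  rw [hcard, Fintype.card_fin] at hle
  omega

theorem kneserGraph_map_neighborFinset (hk : 0 < k) (A : {s : Finset (Fin n) // s.card = k})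
    [Fintype ((kneserGraph n k).neighborSet A)] :
    ((kneserGraph n k).neighborFinset A).map (Function.Embedding.subtype _) =
      Finset.powersetCard k A.1ᶜ := by
  ext S
  simp only [Finset.mem_map, SimpleGraph.mem_neighborFinset, kneserGraph_adj_iff hk,
    Finset.mem_powersetCard, Function.Embedding.subtype_apply,
    Finset.subset_compl_iff_disjoint_left]
  constructor
  · rintro ⟨B, hB, rfl⟩
    exact ⟨hB, B.2⟩
  · rintro ⟨hS, hcard⟩
    exact ⟨⟨S, hcard⟩, hS, rfl⟩

theorem kneserGraph_isRegularOfDegree (hk : 0 < k) [(kneserGraph n k).LocallyFinite] :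
    (kneserGraph n k).IsRegularOfDegree ((n - k).choose k) := by
  intro A
  rw [← SimpleGraph.card_neighborFinset_eq_degree, ← Finset.card_map,
    kneserGraph_map_neighborFinset hk, Finset.card_powersetCard, Finset.card_compl, A.2,
    Fintype.card_fin]

theorem kneserGraph_two_mul_card_edgeSet (hk : 0 < k) :
    2 * Nat.card (kneserGraph n k).edgeSet = n.choose k * (n - k).choose k := by
  classical
  rw [Nat.card_eq_fintype_card, ← SimpleGraph.edgeFinset_card,
    ← SimpleGraph.sum_degrees_eq_twice_card_edges,
    Finset.sum_congr rfl fun A _ => kneserGraph_isRegularOfDegree hk A]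
  simp

end Kneser

/-! ### Automorphisms of odd graphs -/

section Exchange

variable {α : Type*} [DecidableEq α]

theorem card_insert_erase {S : Finset α} {a b : α} (ha : a ∈ S) (hb : b ∉ S) :
    (insert b (S.erase a)).card = S.card := by
  rw [Finset.card_insert_of_notMem fun h => hb (Finset.mem_of_mem_erase h),
    Finset.card_erase_add_one ha]

theorem exchange_induction {p : Finset α → Prop} {T : Finset α}
    (exchange : ∀ S, ∀ a ∈ S \ T, ∀ b ∈ T \ S, p S → p (insert b (S.erase a)))
    {S : Finset α} (hcard : S.card = T.card) (hS : p S) : p T := by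
  induction hm : (S \ T).card generalizing S with
  | zero =>
    rw [Finset.card_eq_zero, Finset.sdiff_eq_empty_iff_subset] at hm
    rwa [← Finset.eq_of_subset_of_card_le hm hcard.ge]
  | succ m ih =>
    have hcomm : (T \ S).card = (S \ T).card := Finset.card_sdiff_comm hcard.symm
    obtain ⟨a, ha⟩ := Finset.card_pos.1 (by omega : 0 < (S \ T).card)
    obtain ⟨b, hb⟩ := Finset.card_pos.1 (by omega : 0 < (T \ S).card)
    refine ih ?_ (exchange S a ha b hb hS) ?_
    · rw [card_insert_erase (Finset.mem_sdiff.1 ha).1 (Finset.mem_sdiff.1 hb).2, hcard]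
    · have hsdiff : insert b (S.erase a) \ T = (S \ T).erase a := by
        rw [Finset.insert_sdiff_of_mem _ (Finset.mem_sdiff.1 hb).1, Finset.erase_sdiff_comm]
      rw [hsdiff, Finset.card_erase_of_mem ha, hm, Nat.add_sub_cancel]

end Exchange

/-- The odd graph `O_{k+1}`, indexed by the size `k` of its vertices rather than by its valency. -/
abbrev oddGraph (k : ℕ) : SimpleGraph {s : Finset (Fin (2 * k + 1)) // s.card = k} :=
  kneserGraph (2 * k + 1) k

section OddGraph

variable {k : ℕ} {A B : {s : Finset (Fin (2 * k + 1)) // s.card = k}} {x : Fin (2 * k + 1)}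

theorem exists_oddGraph_adj_eq_compl_insert (hk : 0 < k) (hA : x ∉ A.1) :
    ∃ B, (oddGraph k).Adj A B ∧ B.1 = (insert x A.1)ᶜ := by
  have hcard : (insert x A.1)ᶜ.card = k := by
    rw [Finset.card_compl, Finset.card_insert_of_notMem hA, A.2, Fintype.card_fin]
    omega
  refine ⟨⟨_, hcard⟩, (kneserGraph_adj_iff hk).2 ?_, rfl⟩
  exact disjoint_compl_right.mono_left (Finset.subset_insert x A.1)

theorem eq_compl_insert_of_oddGraph_adj (hk : 0 < k) (hAB : (oddGraph k).Adj A B) (hA : x ∉ A.1)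
    (hB : x ∉ B.1) : B.1 = (insert x A.1)ᶜ := by
  refine Finset.eq_of_subset_of_card_le ?_ ?_
  · rw [Finset.subset_compl_iff_disjoint_right, Finset.disjoint_insert_right]
    exact ⟨hB, ((kneserGraph_adj_iff hk).1 hAB).symm⟩
  · rw [Finset.card_compl, Finset.card_insert_of_notMem hA, A.2, B.2, Fintype.card_fin]
    omega

theorem exists_notMem_of_oddGraph_adj (hk : 0 < k) (hAB : (oddGraph k).Adj A B) :
    ∃ x, x ∉ A.1 ∧ x ∉ B.1 := by
  have hcard : (A.1 ∪ B.1).card < (Finset.univ : Finset (Fin (2 * k + 1))).card := by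
    rw [Finset.card_union_of_disjoint ((kneserGraph_adj_iff hk).1 hAB), A.2, B.2,
      Finset.card_fin]
    omega
  obtain ⟨x, -, hx⟩ := Finset.exists_mem_notMem_of_card_lt_card hcard
  exact ⟨x, by simpa only [Finset.mem_union, not_or] using hx⟩

theorem notMem_of_oddGraph_path (hk : 0 < k) {C D : {s : Finset (Fin (2 * k + 1)) // s.card = k}}
    (hAB : (oddGraph k).Adj A B) (hBC : (oddGraph k).Adj B C) (hCD : (oddGraph k).Adj C D)
    (hAC : A ≠ C) (hA : x ∉ A.1) (hB : x ∉ B.1) : x ∉ D.1 := by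
  have hC : x ∈ C.1 := by
    by_contra hC
    exact hAC (Subtype.ext ((eq_compl_insert_of_oddGraph_adj hk hAB.symm hB hA).trans
      (eq_compl_insert_of_oddGraph_adj hk hBC hB hC).symm))
  exact Finset.disjoint_left.1 ((kneserGraph_adj_iff hk).1 hCD) hC

theorem notMem_apply_of_exchange (hk : 0 < k) (φ : oddGraph k ≃g oddGraph k)
    (hAB : (oddGraph k).Adj A B) (hA : x ∉ A.1) (hB : x ∉ B.1) {y : Fin (2 * k + 1)}
    (hφA : y ∉ (φ A).1) (hφB : y ∉ (φ B).1) {a b : Fin (2 * k + 1)} (hb : b ∉ A.1)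
    (hbx : b ≠ x) {A' : {s : Finset (Fin (2 * k + 1)) // s.card = k}}
    (hA' : A'.1 = insert b (A.1.erase a)) : y ∉ (φ A').1 := by
  obtain ⟨C, hAC, hC⟩ := exists_oddGraph_adj_eq_compl_insert hk hb
  have hCA' : (oddGraph k).Adj C A' := by
    rw [kneserGraph_adj_iff hk, hC, hA']
    exact disjoint_compl_left.mono_right (Finset.insert_subset_insert b (Finset.erase_subset a A.1))
  have hBC : B ≠ C := by
    rintro rfl
    simp [hC, hA, hbx.symm] at hB
  exact notMem_of_oddGraph_path hk (φ.map_adj_iff.2 hAB.symm) (φ.map_adj_iff.2 hAC)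
    (φ.map_adj_iff.2 hCA') (φ.injective.ne hBC) hφB hφA

/- Label each edge `A B` by the point outside `A ∪ B`. Opposite edges of a hexagon have equal
labels, and swapping a point of `A` with one of `B` leads from `A B` to the opposite edge of a
hexagon through it, so all edges with the same label as `A B` have images with the same label. -/
theorem notMem_apply_of_oddGraph_iso (hk : 0 < k) (φ : oddGraph k ≃g oddGraph k)
    (hAB : (oddGraph k).Adj A B) (hA : x ∉ A.1) (hB : x ∉ B.1) {y : Fin (2 * k + 1)}
    (hφA : y ∉ (φ A).1) (hφB : y ∉ (φ B).1) {C : {s : Finset (Fin (2 * k + 1)) // s.card = k}}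
    (hC : x ∉ C.1) : y ∉ (φ C).1 := by
  let p : Finset (Fin (2 * k + 1)) → Prop := fun S => ∃ A B, A.1 = S ∧ (oddGraph k).Adj A B ∧
    x ∉ A.1 ∧ x ∉ B.1 ∧ y ∉ (φ A).1 ∧ y ∉ (φ B).1
  suffices hp : p C.1 by
    obtain ⟨A', _, hA', -, -, -, hy, -⟩ := hp
    rwa [← Subtype.ext hA']
  refine exchange_induction ?_ (A.2.trans C.2.symm) ⟨A, B, rfl, hAB, hA, hB, hφA, hφB⟩
  rintro S a ha b hb ⟨A, B, rfl, hAB, hA, hB, hφA, hφB⟩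
  obtain ⟨haA, haC⟩ := Finset.mem_sdiff.1 ha
  obtain ⟨hbC, hbA⟩ := Finset.mem_sdiff.1 hb
  have hax : a ≠ x := ne_of_mem_of_not_mem haA hA
  have hbx : b ≠ x := ne_of_mem_of_not_mem hbC hC
  have hdisj := (kneserGraph_adj_iff hk).1 hAB
  have haB : a ∉ B.1 := Finset.disjoint_left.1 hdisj haA
  have hbB : b ∈ B.1 := by
    simp [eq_compl_insert_of_oddGraph_adj hk hAB hA hB, hbx, hbA]
  refine ⟨⟨insert b (A.1.erase a), (card_insert_erase haA hbA).trans A.2⟩,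
    ⟨insert a (B.1.erase b), (card_insert_erase hbB haB).trans B.2⟩, rfl, ?_, ?_, ?_, ?_, ?_⟩
  · rw [kneserGraph_adj_iff hk]
    simp only [Finset.disjoint_left] at hdisj ⊢
    grind
  · simp [hbx.symm, hA]
  · simp [hax.symm, hB]
  · exact notMem_apply_of_exchange hk φ hAB hA hB hφA hφB hbA hbx rfl
  · exact notMem_apply_of_exchange hk φ hAB.symm hB hA hφB hφA haB hax rfl

theorem exists_point_of_oddGraph_iso (hk : 0 < k) (φ : oddGraph k ≃g oddGraph k)
    (x : Fin (2 * k + 1)) :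
    ∃ y, ∀ C : {s : Finset (Fin (2 * k + 1)) // s.card = k}, x ∉ C.1 → y ∉ (φ C).1 := by
  obtain ⟨S, hS, hcard⟩ := Finset.exists_subset_card_eq (s := {x}ᶜ) (n := k) (by
    rw [Finset.card_compl, Finset.card_singleton, Fintype.card_fin]
    omega)
  have hx : x ∉ S := by simpa using Finset.subset_compl_comm.1 hS
  obtain ⟨B, hadj, hB⟩ := exists_oddGraph_adj_eq_compl_insert hk (A := ⟨S, hcard⟩) hx
  obtain ⟨y, hφA, hφB⟩ := exists_notMem_of_oddGraph_adj hk (φ.map_adj_iff.2 hadj)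
  exact ⟨y, fun C => notMem_apply_of_oddGraph_iso hk φ hadj hx (by simp [hB]) hφA hφB⟩

theorem isSeparating_notMem {n k : ℕ} (hk : 0 < k) (hkn : k < n) :
    IsSeparating fun x (A : {s : Finset (Fin n) // s.card = k}) => x ∉ A.1 := by
  intro x y hxy
  by_contra hne
  obtain ⟨S, hyS, hSx, hcard⟩ := Finset.exists_subsuperset_card_eq (s := {y}) (t := {x}ᶜ) (n := k)
    (by simpa using hne) (by rwa [Finset.card_singleton])
    (by rw [Finset.card_compl, Finset.card_singleton, Fintype.card_fin]; omega)
  exact hxy ⟨S, hcard⟩ (by simpa using Finset.subset_compl_comm.1 hSx)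
    (Finset.singleton_subset_iff.1 hyS)

theorem exists_perm_of_oddGraph_iso (hk : 0 < k) (φ : oddGraph k ≃g oddGraph k) :
    ∃ π : Equiv.Perm (Fin (2 * k + 1)),
      ∀ x (A : {s : Finset (Fin (2 * k + 1)) // s.card = k}), x ∉ A.1 ↔ π x ∉ (φ A).1 :=
  have hsep := isSeparating_notMem hk (show k < 2 * k + 1 by omega)
  hsep.exists_equiv hsep φ.toEquiv (exists_point_of_oddGraph_iso hk φ)
    (exists_point_of_oddGraph_iso hk φ.symm)

end OddGraph

/-! ### Involutions -/

section Involution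

variable {α : Type*} {π : Equiv.Perm α}

theorem exists_map_eq_self_card_eq_two (hπ : Function.Involutive π) {T : Finset α}
    (hT : T.map π.toEmbedding = T) (hcard : 1 < T.card) :
    ∃ P ⊆ T, P.card = 2 ∧ P.map π.toEmbedding = P := by
  classical
  by_cases hfix : ∃ p ∈ T, π p ≠ p
  · obtain ⟨p, hp, hne⟩ := hfix
    have hπp : π p ∈ T := hT ▸ Finset.mem_map_of_mem π.toEmbedding hp
    refine ⟨{p, π p}, Finset.insert_subset hp (Finset.singleton_subset_iff.2 hπp),
      Finset.card_pair hne.symm, ?_⟩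
    simp [Finset.map_insert, hπ p, Finset.pair_comm]
  · push Not at hfix
    obtain ⟨p, hp, q, hq, hne⟩ := Finset.one_lt_card.1 hcard
    refine ⟨{p, q}, Finset.insert_subset hp (Finset.singleton_subset_iff.2 hq),
      Finset.card_pair hne, ?_⟩
    simp [Finset.map_insert, hfix p hp, hfix q hq]

theorem exists_map_eq_self_card_eq_two_mul (hπ : Function.Involutive π) {m : ℕ} {T : Finset α}
    (hT : T.map π.toEmbedding = T) (hcard : 2 * m ≤ T.card) :
    ∃ A ⊆ T, A.card = 2 * m ∧ A.map π.toEmbedding = A := by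
  classical
  induction m with
  | zero => exact ⟨∅, Finset.empty_subset T, rfl, Finset.map_empty _⟩
  | succ m ih =>
    obtain ⟨A, hAT, hA, hmapA⟩ := ih (by omega)
    obtain ⟨P, hPT, hP, hmapP⟩ := exists_map_eq_self_card_eq_two hπ (T := T \ A)
      (by rw [Finset.map_sdiff, hT, hmapA])
      (by rw [Finset.card_sdiff_of_subset hAT]; omega)
    refine ⟨A ∪ P, Finset.union_subset hAT (hPT.trans Finset.sdiff_subset), ?_, ?_⟩
    · rw [Finset.card_union_of_disjoint (Finset.disjoint_sdiff.mono_right hPT), hA, hP]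
      ring
    · rw [Finset.map_union, hmapA, hmapP]

theorem exists_apply_eq_self_of_involutive [Fintype α] (hπ : Function.Involutive π)
    (hodd : Odd (Fintype.card α)) : ∃ x, π x = x :=
  Equiv.Perm.exists_fixed_point_of_prime (p := 2) (n := 1) hodd.not_two_dvd_nat
    (by ext x; simp [sq, hπ x])

end Involution

theorem exists_adj_fixed_of_oddGraph_involutive {k : ℕ} (hk : 0 < k) (heven : Even k)
    (φ : oddGraph k ≃g oddGraph k) (hφ : Function.Involutive φ) :
    ∃ A B, (oddGraph k).Adj A B ∧ φ A = A ∧ φ B = B := by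
  obtain ⟨π, hπφ⟩ := exists_perm_of_oddGraph_iso hk φ
  have hπ : Function.Involutive π :=
    (isSeparating_notMem hk (by omega)).involutive hφ fun x A => (hπφ x A).1
  obtain ⟨x, hx⟩ := exists_apply_eq_self_of_involutive hπ (by simp)
  obtain ⟨m, rfl⟩ := even_iff_exists_two_mul.1 heven
  obtain ⟨S, hS, hcard, hmap⟩ := exists_map_eq_self_card_eq_two_mul hπ (m := m) (T := {x}ᶜ)
    (by
      ext y
      simp [← Equiv.eq_symm_apply, hx])
    (by rw [Finset.card_compl, Finset.card_singleton, Fintype.card_fin]; omega)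
  obtain ⟨A, rfl⟩ : ∃ A : {s : Finset (Fin (2 * (2 * m) + 1)) // s.card = 2 * m}, A.1 = S :=
    ⟨⟨S, hcard⟩, rfl⟩
  have hxA : x ∉ A.1 := by simpa using Finset.subset_compl_comm.1 hS
  obtain ⟨B, hAB, hB⟩ := exists_oddGraph_adj_eq_compl_insert hk hxA
  have hφA : φ A = A := by
    refine Subtype.ext (Eq.trans ?_ hmap)
    ext y
    obtain ⟨z, rfl⟩ := π.surjective y
    exact (not_iff_not.1 (hπφ z A)).symm.trans (Finset.mem_map' π.toEmbedding).symm
  have hxφB : x ∉ (φ B).1 := by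
    rw [← hx, ← hπφ]
    simp [hB]
  have hadj : (oddGraph (2 * m)).Adj A (φ B) := by
    simpa only [hφA] using φ.map_adj_iff.2 hAB
  exact ⟨A, B, hAB, hφA,
    Subtype.ext ((eq_compl_insert_of_oddGraph_adj hk hadj hxA hxφB).trans hB.symm)⟩

theorem oddGraph_neighborSet_nontrivial {k : ℕ} (hk : 0 < k)
    (A : {s : Finset (Fin (2 * k + 1)) // s.card = k}) :
    ((oddGraph k).neighborSet A).Nontrivial := by
  classical
  rw [← SimpleGraph.coe_neighborFinset]
  refine Finset.one_lt_card_iff_nontrivial.1 ?_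
  rw [SimpleGraph.card_neighborFinset_eq_degree, kneserGraph_isRegularOfDegree hk A,
    show 2 * k + 1 - k = k + 1 by omega, Nat.choose_succ_self_right]
  omega

theorem oddGraph_two_mul_card_edgeSet {k : ℕ} (hk : 0 < k) :
    2 * Nat.card (oddGraph k).edgeSet = (2 * k + 1).choose k * (k + 1) := by
  rw [kneserGraph_two_mul_card_edgeSet hk, show 2 * k + 1 - k = k + 1 by omega,
    Nat.choose_succ_self_right]

theorem exists_fixed_edge_of_lineGraph_oddGraph_involutive {k : ℕ} (hk : 0 < k) (heven : Even k)
    (σ : (oddGraph k).lineGraph ≃g (oddGraph k).lineGraph) (hσ : Function.Involutive σ) :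
    ∃ e, σ e = e := by
  have hk1 : k ≠ 1 := by
    rintro rfl
    exact Nat.not_even_one heven
  have hfree : (oddGraph k).CliqueFree 3 := kneserGraph_cliqueFree (by omega)
  have hnt := oddGraph_neighborSet_nontrivial hk
  obtain ⟨φ, hφσ⟩ := exists_iso_of_lineGraph_iso hfree hfree hnt hnt σ
  have hφ : Function.Involutive φ :=
    (isSeparating_mem_edge hnt).involutive hσ fun v e => (hφσ v e).1
  obtain ⟨A, B, hAB, hA, hB⟩ := exists_adj_fixed_of_oddGraph_involutive hk heven φ hφ
  let e : (oddGraph k).edgeSet := ⟨s(A, B), hAB⟩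
  have hAσ : A ∈ (σ e).1 := hA ▸ (hφσ A e).1 (Sym2.mem_mk_left A B)
  have hBσ : B ∈ (σ e).1 := hB ▸ (hφσ B e).1 (Sym2.mem_mk_right A B)
  exact ⟨e, Subtype.ext ((Sym2.mem_and_mem_iff hAB.ne).1 ⟨hAσ, hBσ⟩)⟩

theorem IsCayleyGraph.exists_orderOf_eq_prime {V : Type*} {G : SimpleGraph V} [Finite V]
    [Nonempty V] (hG : IsCayleyGraph G) {p : ℕ} [Fact p.Prime] (hp : p ∣ Nat.card V) :
    ∃ σ : G ≃g G, orderOf σ = p ∧ ∀ v, σ v ≠ v := by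
  obtain ⟨H, hH⟩ := hG
  obtain ⟨v₀⟩ := ‹Nonempty V›
  have hbij : Function.Bijective fun g : H => (g : G ≃g G) v₀ :=
    ⟨fun g g' h => (hH v₀ _).unique h rfl, fun w => (hH v₀ w).exists⟩
  have : Finite H := Finite.of_injective _ hbij.injective
  rw [← Nat.card_congr (Equiv.ofBijective _ hbij)] at hp
  obtain ⟨g, hg⟩ := exists_prime_orderOf_dvd_card' p hp
  refine ⟨g, (Subgroup.orderOf_coe g).trans hg, fun v hv => ?_⟩
  have hg1 : g = 1 := (hH v v).unique hv rfl
  exact (Fact.out : p.Prime).ne_one (by rw [← hg, hg1, orderOf_one])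

theorem line_graph_odd_graph_not_cayley_of_four_dvd (k : ℕ) (hk : 4 < k) (hkeven : Even k)
    (h4 : 4 ∣ (2 * k + 1).choose k) :
    ¬ IsCayleyGraph (kneserGraph (2 * k + 1) k).lineGraph := by
  intro hCayley
  have hk0 : 0 < k := by omega
  have hcard := oddGraph_two_mul_card_edgeSet hk0
  have htwo : 2 ∣ Nat.card (oddGraph k).edgeSet := by
    have : 4 ∣ 2 * Nat.card (oddGraph k).edgeSet := hcard ▸ h4.mul_right (k + 1)
    omega
  have hpos : 0 < (2 * k + 1).choose k * (k + 1) :=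
    Nat.mul_pos (Nat.choose_pos (by omega)) k.succ_pos
  obtain ⟨_, _⟩ := Nat.card_pos_iff.1 (by omega : 0 < Nat.card (oddGraph k).edgeSet)
  obtain ⟨σ, hσ, hfree⟩ := hCayley.exists_orderOf_eq_prime htwo
  have hinv : Function.Involutive σ := fun e => by
    have hsq : σ ^ 2 = 1 := (orderOf_eq_prime_iff.1 hσ).1
    exact DFunLike.congr_fun (sq σ ▸ hsq) e
  obtain ⟨e, he⟩ := exists_fixed_edge_of_lineGraph_oddGraph_involutive hk0 hkeven σ hinv
  exact hfree e he
end

section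
/- Let k > 4 be an even integer such that k is not of the form 2^t for any integer t > 2. Then the line graph L(O_{k+1}) of the odd graph O_{k+1} is not a Cayley graph; that is, no subgroup of the automorphism group of L(O_{k+1}) acts regularly (freely and transitively) on its vertex set. -/
/-!
For an automorphism of the line graph of a triangle-free graph `G` with minimum degree at least
two, the images of the edges at a vertex are again the edges at a vertex, so `Aut L(G) = Aut G`. A
regular subgroup of `Aut L(G)` is therefore a subgroup of `Aut G` acting regularly on the edges of
`G`. If `G` is not bipartite, edge-transitivity forces vertex-transitivity, and the orbit-stabilizer
theorem shows that the number of vertices divides the number of edges. When `G` is regular of odd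
degree `d` this is impossible, because the number of edges is `d / 2` times the number of vertices.
The odd graph `O_{k+1}` has degree `k + 1`.
-/

section LineGraphAut

variable {V : Type*} {G : SimpleGraph V}

theorem not_adj_of_cliqueFree_three (hG : G.CliqueFree 3) {a b c : V} (hab : G.Adj a b)
    (hbc : G.Adj b c) : ¬ G.Adj a c := by
  classical
  exact fun hac => hG {a, b, c} (SimpleGraph.is3Clique_triple_iff.2 ⟨hab, hac, hbc⟩)

theorem mem_edge_of_pairwise_meet (hG : G.CliqueFree 3) {e₁ e₂ e : G.edgeSet} (hne : e₁ ≠ e₂)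
    {p q w : V} (hw₁ : w ∈ e₁.1) (hw₂ : w ∈ e₂.1) (hp : p ∈ e.1) (hp₁ : p ∈ e₁.1)
    (hq : q ∈ e.1) (hq₂ : q ∈ e₂.1) : w ∈ e.1 := by
  by_contra hw
  have hwp : w ≠ p := fun h => hw (h ▸ hp)
  have hwq : w ≠ q := fun h => hw (h ▸ hq)
  have he₁ : e₁.1 = s(w, p) := (Sym2.mem_and_mem_iff hwp).1 ⟨hw₁, hp₁⟩
  have he₂ : e₂.1 = s(w, q) := (Sym2.mem_and_mem_iff hwq).1 ⟨hw₂, hq₂⟩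
  have hpq : p ≠ q := by
    rintro rfl
    exact hne (Subtype.ext (he₁.trans he₂.symm))
  have he : e.1 = s(p, q) := (Sym2.mem_and_mem_iff hpq).1 ⟨hp, hq⟩
  have hadj_wp : G.Adj w p := by simpa only [he₁, SimpleGraph.mem_edgeSet] using e₁.2
  have hadj_wq : G.Adj w q := by simpa only [he₂, SimpleGraph.mem_edgeSet] using e₂.2
  have hadj_pq : G.Adj p q := by simpa only [he, SimpleGraph.mem_edgeSet] using e.2
  exact not_adj_of_cliqueFree_three hG hadj_wp hadj_pq hadj_wq

theorem eq_of_forall_mem_edge (hdeg : ∀ v, (G.neighborSet v).Nontrivial) {v w : V}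
    (h : ∀ e ∈ G.edgeSet, v ∈ e → w ∈ e) : v = w := by
  obtain ⟨a, ha, b, hb, hab⟩ := hdeg v
  have hwa : w = v ∨ w = a := Sym2.mem_iff.1 (h s(v, a) ha (Sym2.mem_mk_left v a))
  have hwb : w = v ∨ w = b := Sym2.mem_iff.1 (h s(v, b) hb (Sym2.mem_mk_left v b))
  grind

theorem exists_common_mem_map_edge {e f : G.edgeSet} (φ : G.lineGraph ≃g G.lineGraph) {v : V}
    (he : v ∈ e.1) (hf : v ∈ f.1) : ∃ p, p ∈ (φ e).1 ∧ p ∈ (φ f).1 := by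
  obtain rfl | hef := eq_or_ne e f
  · exact ⟨_, Sym2.out_fst_mem _, Sym2.out_fst_mem _⟩
  · exact (φ.map_adj_iff.2 ⟨hef, v, he, hf⟩).2

theorem exists_forall_mem_map_edge (hG : G.CliqueFree 3)
    (hdeg : ∀ v, (G.neighborSet v).Nontrivial) (φ : G.lineGraph ≃g G.lineGraph) (v : V) :
    ∃ w, ∀ e : G.edgeSet, v ∈ e.1 → w ∈ (φ e).1 := by
  obtain ⟨a, ha, b, hb, hab⟩ := hdeg v
  let e₁ : G.edgeSet := ⟨s(v, a), ha⟩
  let e₂ : G.edgeSet := ⟨s(v, b), hb⟩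
  have hv₁ : v ∈ e₁.1 := Sym2.mem_mk_left v a
  have hv₂ : v ∈ e₂.1 := Sym2.mem_mk_left v b
  have hne : φ e₁ ≠ φ e₂ := fun h =>
    hab (Sym2.congr_right.1 (congrArg Subtype.val (φ.injective h)))
  obtain ⟨w, hw₁, hw₂⟩ := exists_common_mem_map_edge φ hv₁ hv₂
  refine ⟨w, fun e he => ?_⟩
  obtain ⟨p, hp, hp₁⟩ := exists_common_mem_map_edge φ he hv₁
  obtain ⟨q, hq, hq₂⟩ := exists_common_mem_map_edge φ he hv₂
  exact mem_edge_of_pairwise_meet hG hne hw₁ hw₂ hp hp₁ hq hq₂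

theorem leftInverse_of_mem_map_edge (hdeg : ∀ v, (G.neighborSet v).Nontrivial)
    {φ : G.lineGraph ≃g G.lineGraph} {f g : V → V}
    (hf : ∀ v, ∀ e : G.edgeSet, v ∈ e.1 → f v ∈ (φ e).1)
    (hg : ∀ v, ∀ e : G.edgeSet, v ∈ e.1 → g v ∈ (φ.symm e).1) : Function.LeftInverse g f := by
  refine fun v => (eq_of_forall_mem_edge hdeg fun e he hv => ?_).symm
  simpa only [RelIso.symm_apply_apply] using hg _ _ (hf v ⟨e, he⟩ hv)

theorem map_edge_eq_of_mem {φ : G.lineGraph ≃g G.lineGraph} {f : V → V}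
    (hinj : Function.Injective f) (hf : ∀ v, ∀ e : G.edgeSet, v ∈ e.1 → f v ∈ (φ e).1)
    (e : G.edgeSet) : (φ e).1 = e.1.map f := by
  obtain ⟨⟨a, b⟩, hab : G.Adj a b⟩ := e
  exact (Sym2.mem_and_mem_iff (hinj.ne hab.ne)).1
    ⟨hf a _ (Sym2.mem_mk_left a b), hf b _ (Sym2.mem_mk_right a b)⟩

/-- The natural homomorphism `Aut G → Aut L(G)`, through which a group of automorphisms of the line
graph is pulled back to a group of automorphisms of `G`. -/
def lineGraphAutHom (G : SimpleGraph V) : (G ≃g G) →* (G.lineGraph ≃g G.lineGraph) where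
  toFun := SimpleGraph.Iso.lineGraph
  map_one' := RelIso.ext fun e => Subtype.ext (congrFun Sym2.map_id e.1)
  map_mul' ψ χ := RelIso.ext fun e => Subtype.ext (Sym2.map_map (g := ψ) (f := χ) e.1).symm

theorem lineGraphAutHom_injective (hdeg : ∀ v, (G.neighborSet v).Nontrivial) :
    Function.Injective (lineGraphAutHom G) := by
  refine (injective_iff_map_eq_one _).2 fun ψ hψ => RelIso.ext fun v => ?_
  refine (eq_of_forall_mem_edge hdeg fun e he hv => ?_).symm
  have hfix : e.map ψ = e := congrArg (fun φ => (φ ⟨e, he⟩).1) hψ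
  exact hfix ▸ Sym2.mem_map.2 ⟨v, hv, rfl⟩

theorem lineGraphAutHom_surjective (hG : G.CliqueFree 3)
    (hdeg : ∀ v, (G.neighborSet v).Nontrivial) : Function.Surjective (lineGraphAutHom G) := by
  intro φ
  choose f hf using exists_forall_mem_map_edge hG hdeg φ
  choose g hg using exists_forall_mem_map_edge hG hdeg φ.symm
  have hgf : Function.LeftInverse g f := leftInverse_of_mem_map_edge hdeg hf hg
  have hfg : Function.LeftInverse f g := leftInverse_of_mem_map_edge hdeg hg hf
  have adj_map {φ' : G.lineGraph ≃g G.lineGraph} {f' : V → V}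
      (hmap : ∀ e, (φ' e).1 = e.1.map f') {a b : V} (hab : G.Adj a b) : G.Adj (f' a) (f' b) :=
    have hmem : s(a, b).map f' ∈ G.edgeSet := hmap ⟨s(a, b), hab⟩ ▸ (φ' ⟨s(a, b), hab⟩).2
    hmem
  have hφ := map_edge_eq_of_mem hgf.injective hf
  have hφsymm := map_edge_eq_of_mem hfg.injective hg
  refine ⟨⟨⟨f, g, hgf, hfg⟩, ⟨fun h => ?_, adj_map hφ⟩⟩, ?_⟩
  · simpa only [Equiv.coe_fn_mk, hgf _] using adj_map hφsymm h
  · exact RelIso.ext fun e => Subtype.ext (hφ e).symm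

theorem IsCayleyGraph.exists_subgroup_regular_on_edges (h : IsCayleyGraph G.lineGraph)
    (hG : G.CliqueFree 3) (hdeg : ∀ v, (G.neighborSet v).Nontrivial) :
    ∃ K : Subgroup (G ≃g G), ∀ e f : G.edgeSet, ∃! g : K, e.1.map (g • ·) = f.1 := by
  obtain ⟨H, hH⟩ := h
  refine ⟨H.comap (lineGraphAutHom G), fun e f => ?_⟩
  obtain ⟨⟨φ, hφ⟩, hφe, huniq⟩ := hH e f
  obtain ⟨ψ, rfl⟩ := lineGraphAutHom_surjective hG hdeg φ
  refine ⟨⟨ψ, hφ⟩, congrArg Subtype.val hφe, fun ⟨ψ', hψ'⟩ hψ'e => ?_⟩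
  have heq := huniq ⟨lineGraphAutHom G ψ', hψ'⟩ (Subtype.ext hψ'e)
  exact Subtype.ext (lineGraphAutHom_injective hdeg (congrArg Subtype.val heq))

end LineGraphAut

section EdgeTransitive

variable {V : Type*} {G : SimpleGraph V}

theorem nonempty_of_not_isBipartite (hbip : ¬ G.IsBipartite) : Nonempty V := by
  by_contra hV
  have : IsEmpty V := not_nonempty_iff.1 hV
  exact hbip (SimpleGraph.Colorable.of_isEmpty 2)

theorem mem_orbit_of_edge_transitive {Γ : Type*} [Monoid Γ] [MulAction Γ V]
    (htrans : ∀ e f : G.edgeSet, ∃ g : Γ, e.1.map (g • ·) = f.1) {u v a b : V}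
    (huv : G.Adj u v) (hab : G.Adj a b) :
    a ∈ MulAction.orbit Γ u ∧ b ∈ MulAction.orbit Γ v ∨
      a ∈ MulAction.orbit Γ v ∧ b ∈ MulAction.orbit Γ u := by
  obtain ⟨g, hg⟩ := htrans ⟨s(u, v), huv⟩ ⟨s(a, b), hab⟩
  exact (Sym2.eq_iff.1 hg).imp (fun h => ⟨⟨g, h.1⟩, ⟨g, h.2⟩⟩) (fun h => ⟨⟨g, h.2⟩, ⟨g, h.1⟩⟩)

-- If the two ends of an edge lay in different orbits, these orbits would be the parts of a
-- bipartition.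
theorem isPretransitive_of_edge_transitive {Γ : Type*} [Group Γ] [MulAction Γ V]
    (hbip : ¬ G.IsBipartite) (hdeg : ∀ v, (G.neighborSet v).Nonempty)
    (htrans : ∀ e f : G.edgeSet, ∃ g : Γ, e.1.map (g • ·) = f.1) :
    MulAction.IsPretransitive Γ V := by
  refine ⟨fun u w => ?_⟩
  obtain ⟨v, huv⟩ := hdeg u
  rcases MulAction.orbit.eq_or_disjoint (G := Γ) u v with heq | hdisj
  · obtain ⟨x, hwx⟩ := hdeg w
    have hw := mem_orbit_of_edge_transitive htrans huv hwx
    rw [← heq] at hw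
    exact hw.elim And.left And.left
  · have hparts : G.IsBipartiteWith (MulAction.orbit Γ u) (MulAction.orbit Γ v) :=
      ⟨hdisj, fun _ _ hab => mem_orbit_of_edge_transitive htrans huv hab⟩
    exact absurd hparts.isBipartite hbip

theorem IsCayleyGraph.card_dvd_card_edgeSet (h : IsCayleyGraph G.lineGraph)
    (hG : G.CliqueFree 3) (hbip : ¬ G.IsBipartite) (hdeg : ∀ v, (G.neighborSet v).Nontrivial) :
    Nat.card V ∣ Nat.card G.edgeSet := by
  obtain ⟨K, hK⟩ := h.exists_subgroup_regular_on_edges hG hdeg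
  have : MulAction.IsPretransitive K V := isPretransitive_of_edge_transitive hbip
    (fun v => (hdeg v).nonempty) fun e f => (hK e f).exists
  obtain ⟨v⟩ := nonempty_of_not_isBipartite hbip
  obtain ⟨a, ha⟩ := (hdeg v).nonempty
  let e : G.edgeSet := ⟨s(v, a), ha⟩
  have hcard : Nat.card K = Nat.card G.edgeSet :=
    Nat.card_eq_of_bijective (fun g => lineGraphAutHom G g e)
      ⟨fun _ g' hg => (hK e (lineGraphAutHom G g' e)).unique (congrArg Subtype.val hg) rfl,
        fun f => (hK e f).exists.imp fun _ hg => Subtype.ext hg⟩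
  calc Nat.card V = (MulAction.stabilizer K v).index :=
        (MulAction.index_stabilizer_of_transitive K v).symm
    _ ∣ Nat.card K := Subgroup.index_dvd_card _
    _ = Nat.card G.edgeSet := hcard

theorem not_card_dvd_card_edgeSet_of_odd [Fintype V] [Nonempty V] [DecidableRel G.Adj] {d : ℕ}
    (hreg : G.IsRegularOfDegree d) (hd : Odd d) : ¬ Nat.card V ∣ Nat.card G.edgeSet := by
  rintro ⟨m, hm⟩
  have hcard : Nat.card V * d = Nat.card V * (2 * m) := by
    calc Nat.card V * d = ∑ v, G.degree v := by
          simp only [hreg.degree_eq, Finset.sum_const, smul_eq_mul, Finset.card_univ,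
            Nat.card_eq_fintype_card]
      _ = 2 * Nat.card G.edgeSet := by
          rw [G.sum_degrees_eq_twice_card_edges, Nat.card_eq_fintype_card,
            SimpleGraph.edgeFinset_card]
      _ = Nat.card V * (2 * m) := by rw [hm, Nat.mul_left_comm]
  have hd2 : d = 2 * m := Nat.eq_of_mul_eq_mul_left Nat.card_pos hcard
  exact Nat.not_even_iff_odd.2 hd (hd2 ▸ even_two_mul m)

theorem not_isCayleyGraph_lineGraph_of_odd [Fintype V] [DecidableRel G.Adj]
    (hG : G.CliqueFree 3) (hbip : ¬ G.IsBipartite) {d : ℕ} (hreg : G.IsRegularOfDegree d)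
    (hd : Odd d) (hd1 : d ≠ 1) : ¬ IsCayleyGraph G.lineGraph := by
  have := nonempty_of_not_isBipartite hbip
  have hdeg : ∀ v, (G.neighborSet v).Nontrivial := by
    intro v
    have hcard : 1 < (G.neighborFinset v).card := by
      rw [G.card_neighborFinset_eq_degree, hreg.degree_eq]
      exact lt_of_le_of_ne hd.pos hd1.symm
    rw [← SimpleGraph.coe_neighborFinset]
    exact Finset.one_lt_card_iff_nontrivial.1 hcard
  exact fun h => not_card_dvd_card_edgeSet_of_odd hreg hd
    (h.card_dvd_card_edgeSet hG hbip hdeg)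

end EdgeTransitive

section Kneser

variable {n k : ℕ}

theorem kneserGraph_adj_s11 (hk : 0 < k) {a b : {s : Finset (Fin n) // s.card = k}} :
    (kneserGraph n k).Adj a b ↔ Disjoint a.1 b.1 := by
  simp only [kneserGraph, SimpleGraph.fromRel_adj, disjoint_comm (a := b.1), or_self]
  refine and_iff_right_of_imp ?_
  rintro hab rfl
  have hempty : a.1 = ∅ := disjoint_self.1 hab
  exact hk.ne' (a.2.symm.trans (Finset.card_eq_zero.2 hempty))

theorem kneserGraph_cliqueFree_three (hk : 0 < k) (hn : n < 3 * k) :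
    (kneserGraph n k).CliqueFree 3 := by
  intro S hS
  obtain ⟨a, b, c, hab, hac, hbc, -⟩ := SimpleGraph.is3Clique_iff.1 hS
  rw [kneserGraph_adj_s11 hk] at hab hac hbc
  have hle := Finset.card_le_univ ((a.1 ∪ b.1) ∪ c.1)
  rw [Finset.card_union_of_disjoint (Finset.disjoint_union_left.2 ⟨hac, hbc⟩),
    Finset.card_union_of_disjoint hab, a.2, b.2, c.2, Fintype.card_fin] at hle
  omega

theorem kneserGraph_exists_common_adj (hk : 0 < k) {a b : {s : Finset (Fin n) // s.card = k}}
    (h : (a.1 ∪ b.1).card + k ≤ n) :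
    ∃ c, (kneserGraph n k).Adj a c ∧ (kneserGraph n k).Adj b c := by
  have hcompl : k ≤ (a.1 ∪ b.1)ᶜ.card := by
    rw [Finset.card_compl, Fintype.card_fin]
    omega
  obtain ⟨c, hc, hcard⟩ := Finset.exists_subset_card_eq hcompl
  have hdisj := Finset.subset_compl_iff_disjoint_left.1 hc
  rw [Finset.disjoint_union_left] at hdisj
  exact ⟨⟨c, hcard⟩, (kneserGraph_adj_s11 hk).2 hdisj.1, (kneserGraph_adj_s11 hk).2 hdisj.2⟩

theorem kneserGraph_coloring_eq_of_card_union_le (hk : 0 < k)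
    (C : (kneserGraph n k).Coloring (Fin 2)) {a b : {s : Finset (Fin n) // s.card = k}}
    (h : (a.1 ∪ b.1).card + k ≤ n) : C a = C b := by
  obtain ⟨c, hac, hbc⟩ := kneserGraph_exists_common_adj hk h
  have hCac := C.valid hac
  have hCbc := C.valid hbc
  omega

-- `a` is turned into `b` by exchanging one element at a time.
theorem kneserGraph_coloring_eq (hk : 0 < k) (hn : 2 * k < n)
    (C : (kneserGraph n k).Coloring (Fin 2)) (a b : {s : Finset (Fin n) // s.card = k}) :
    C a = C b := by
  induction hm : (a.1 \ b.1).card generalizing a with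
  | zero =>
    have hsub : a.1 ⊆ b.1 := Finset.sdiff_eq_empty_iff_subset.1 (Finset.card_eq_zero.1 hm)
    rw [Subtype.ext (Finset.eq_of_subset_of_card_le hsub (by rw [a.2, b.2]))]
  | succ m ih =>
    have hm' : (b.1 \ a.1).card = m + 1 := by
      rw [← hm, Finset.card_sdiff_comm (b.2.trans a.2.symm)]
    obtain ⟨x, hx⟩ := Finset.card_pos.1 (m.succ_pos.trans_eq hm.symm)
    obtain ⟨y, hy⟩ := Finset.card_pos.1 (m.succ_pos.trans_eq hm'.symm)
    have hxa : x ∈ a.1 := (Finset.mem_sdiff.1 hx).1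
    obtain ⟨hyb, hya⟩ := Finset.mem_sdiff.1 hy
    have hcard : (insert y (a.1.erase x)).card = k := by
      rw [Finset.card_insert_of_notMem fun h => hya (Finset.mem_of_mem_erase h),
        Finset.card_erase_add_one hxa, a.2]
    have hunion : a.1 ∪ insert y (a.1.erase x) = insert y a.1 := by
      rw [Finset.union_insert, Finset.union_eq_left.2 (Finset.erase_subset x a.1)]
    have hsdiff : insert y (a.1.erase x) \ b.1 = (a.1 \ b.1).erase x := by
      rw [Finset.insert_sdiff_of_mem _ hyb, Finset.erase_sdiff_comm]
    calc C a = C ⟨insert y (a.1.erase x), hcard⟩ :=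
          kneserGraph_coloring_eq_of_card_union_le hk C (by
            rw [hunion, Finset.card_insert_of_notMem hya, a.2]
            omega)
      _ = C b := ih _ (by rw [hsdiff, Finset.card_erase_of_mem hx, hm, Nat.add_sub_cancel])

theorem kneserGraph_exists_adj (hk : 0 < k) (hn : 2 * k ≤ n) :
    ∃ a b, (kneserGraph n k).Adj a b := by
  have huniv : k ≤ (Finset.univ : Finset (Fin n)).card := by
    rw [Finset.card_univ, Fintype.card_fin]
    omega
  obtain ⟨s, -, hs⟩ := Finset.exists_subset_card_eq huniv
  have hcard : (s ∪ s).card + k ≤ n := by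
    rw [Finset.union_self, hs, ← two_mul]
    exact hn
  obtain ⟨b, hab, -⟩ := kneserGraph_exists_common_adj hk (a := ⟨s, hs⟩) (b := ⟨s, hs⟩) hcard
  exact ⟨_, b, hab⟩

theorem kneserGraph_not_isBipartite (hk : 0 < k) (hn : 2 * k < n) :
    ¬ (kneserGraph n k).IsBipartite := by
  rintro ⟨C⟩
  obtain ⟨a, b, hab⟩ := kneserGraph_exists_adj hk hn.le
  exact C.valid hab (kneserGraph_coloring_eq hk hn C a b)

theorem line_graph_odd_graph_not_cayley_general (hn : 2 * k < n) (hn' : n < 3 * k)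
    (hodd : Odd ((n - k).choose k)) : ¬ IsCayleyGraph (kneserGraph n k).lineGraph := by
  classical
  have hk : 0 < k := by omega
  have hdeg : (n - k).choose k ≠ 1 := by
    rw [ne_eq, Nat.choose_eq_one_iff]
    omega
  exact not_isCayleyGraph_lineGraph_of_odd (kneserGraph_cliqueFree_three hk hn')
    (kneserGraph_not_isBipartite hk hn) (kneserGraph_isRegularOfDegree hk) hodd hdeg

end Kneser

theorem line_graph_odd_graph_not_cayley (k : ℕ) (hk : 4 < k) (hkeven : Even k)
    (h : ¬ ∃ t : ℕ, 2 < t ∧ k = 2 ^ t) :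
    ¬ IsCayleyGraph (kneserGraph (2 * k + 1) k).lineGraph := by
  have hdeg : (2 * k + 1 - k).choose k = k + 1 := by
    rw [show 2 * k + 1 - k = k + 1 by omega, Nat.choose_succ_self_right]
  exact line_graph_odd_graph_not_cayley_general (by omega) (by omega) (hdeg ▸ hkeven.add_one)
end
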